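/- For every n-qudit state ρ: D(ρ‖M(ρ)) = H(M(ρ)) − H(ρ), and for every MSPS σ one has D(ρ‖M(ρ)) ≤ D(ρ‖σ); that is, the mean state M(ρ) is a closest MSPS to ρ in relative entropy. -/

import Mathlib

open scoped BigOperators ComplexOrder Classical ENNReal
open Matrix

namespace PaperQI

/-- The computational-basis index set `ℤ_d^n` for an `n`-qudit system. -/
abbrev QV (d n : ℕ) := Fin n → ZMod d

/-- Matrices (linear operators) on the `n`-qudit Hilbert space `(ℂ^d)^{⊗ n}`,
written in the computational basis indexed by `ℤ_d^n`. -/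
abbrev Mat (d n : ℕ) := Matrix (QV d n) (QV d n) ℂ

/-- The character `ξ^z = exp(2πi z/d)` for `z ∈ ℤ_d`. -/
noncomputable def ch (d : ℕ) (z : ZMod d) : ℂ :=
  Complex.exp (2 * Real.pi * Complex.I * (z.val : ℂ) / (d : ℂ))

/-- Dot product on `ℤ_d^n`. -/
def qdot {d n : ℕ} (p k : QV d n) : ZMod d := ∑ i, p i * k i

/-- The `n`-qudit Weyl operator `w(p,q) = ⊗_i ξ^{-2⁻¹ p_i q_i} Z^{p_i} X^{q_i}`
(for odd prime `d`).  Its matrix entries are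
`w(p,q)[k+q, k] = ξ^{p·k + 2⁻¹ p·q}`. -/
noncomputable def weyl (d n : ℕ) [Fact (Nat.Prime d)] (p q : QV d n) : Mat d n :=
  Matrix.of fun k' k =>
    if k' = k + q then ch d (qdot p k + (2 : ZMod d)⁻¹ * qdot p q) else 0

/-- `ρ` is an `n`-qudit state: positive semidefinite with trace one. -/
def IsState (d n : ℕ) [Fact (Nat.Prime d)] (ρ : Mat d n) : Prop :=
  ρ.PosSemidef ∧ ρ.trace = 1

/-- The characteristic function `Ξ_ρ(p,q) = Tr[ρ w(-p,-q)]`. -/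
noncomputable def xi (d n : ℕ) [Fact (Nat.Prime d)] (ρ : Mat d n)
    (pq : QV d n × QV d n) : ℂ :=
  (ρ * weyl d n (-pq.1) (-pq.2)).trace

/-- The mean state `M(ρ) = d^{-n} ∑_{|Ξ_ρ(p,q)| = 1} Ξ_ρ(p,q) w(p,q)`. -/
noncomputable def meanState (d n : ℕ) [Fact (Nat.Prime d)] (ρ : Mat d n) : Mat d n :=
  ((d : ℂ) ^ n)⁻¹ •
    ∑ pq : QV d n × QV d n,
      if ‖xi d n ρ pq‖ = 1 then xi d n ρ pq • weyl d n pq.1 pq.2 else 0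

/-- `ρ` is a minimal stabilizer-projection state (MSPS): for some `r ≤ n` there are
mutually commuting Weyl operators `w(p_i,q_i)`, `i = 1,…,r`, whose labels generate a
subgroup of `V^n` of order `d^r`, and phases `x ∈ ℤ_d^r`, such that
`ρ = d^{-(n-r)} ∏_i ( (1/d) ∑_{k ∈ ℤ_d} (ξ^{x_i} w(p_i,q_i))^k )`. -/
noncomputable def IsMSPS (d n : ℕ) [Fact (Nat.Prime d)] (ρ : Mat d n) : Prop :=
  ∃ r : ℕ, r ≤ n ∧
    ∃ (p q : Fin r → QV d n) (x : Fin r → ZMod d),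
      (∀ i j, Commute (weyl d n (p i) (q i)) (weyl d n (p j) (q j))) ∧
      Nat.card (AddSubgroup.closure (Set.range fun i => (p i, q i)) :
        AddSubgroup (QV d n × QV d n)) = d ^ r ∧
      ρ = ((d : ℂ) ^ (n - r))⁻¹ •
        (List.ofFn fun i =>
          (d : ℂ)⁻¹ • ∑ k : ZMod d, (ch d (x i) • weyl d n (p i) (q i)) ^ k.val).prod

/-- The magic gap `MG(ρ) = 1 - max{|Ξ_ρ(p,q)| : Ξ_ρ(p,q) ≠ 0, |Ξ_ρ(p,q)| ≠ 1}`,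
and `MG(ρ) = 0` if this set is empty. -/
noncomputable def magicGap (d n : ℕ) [Fact (Nat.Prime d)] (ρ : Mat d n) : ℝ :=
  let s : Finset ℝ :=
    (Finset.univ.filter fun pq : QV d n × QV d n =>
      xi d n ρ pq ≠ 0 ∧ ‖xi d n ρ pq‖ ≠ 1).image
      fun pq => ‖xi d n ρ pq‖
  if h : s.Nonempty then 1 - s.max' h else 0

/-- Von Neumann entropy `H(ρ) = -∑ λ_i log λ_i` (natural log, eigenvalues of `ρ`),
with the convention `0 log 0 = 0`; junk value `0` on non-Hermitian matrices. -/
noncomputable def vnEnt {d n : ℕ} [Fact (Nat.Prime d)] (ρ : Mat d n) : ℝ :=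
  if h : ρ.IsHermitian then -∑ i, h.eigenvalues i * Real.log (h.eigenvalues i) else 0

/-- Rényi entropy `H_α` for `α ∈ [0,∞]`:  `H_0 = log rank`, `H_1 = H` (von Neumann),
`H_∞ = -log λ_max`, and `H_α = (1-α)⁻¹ log ∑ λ_i^α` otherwise. -/
noncomputable def renyiEnt {d n : ℕ} [Fact (Nat.Prime d)] (α : ℝ≥0∞) (ρ : Mat d n) : ℝ :=
  if h : ρ.IsHermitian then
    if α = 0 then Real.log (ρ.rank : ℝ)
    else if α = 1 then -∑ i, h.eigenvalues i * Real.log (h.eigenvalues i)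
    else if α = ⊤ then -Real.log (⨆ i, h.eigenvalues i)
    else (1 - α.toReal)⁻¹ * Real.log (∑ i, h.eigenvalues i ^ α.toReal)
  else 0

/-- Matrix logarithm on the support: `log ρ = U diag(log λ_i) U†` via the spectral
decomposition, with `log 0 = 0` on the kernel; junk value `0` off Hermitian matrices. -/
noncomputable def matLog {d n : ℕ} [Fact (Nat.Prime d)] (ρ : Mat d n) : Mat d n :=
  if h : ρ.IsHermitian then
    (h.eigenvectorUnitary : Mat d n) *
      Matrix.diagonal (fun i => (Real.log (h.eigenvalues i) : ℂ)) *
      star (h.eigenvectorUnitary : Mat d n)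
  else 0

/-- Matrix real power on the support: `ρ^t = U diag(λ_i^t) U†`, with `0^t = 0` on the
kernel (for `t ≠ 0`); junk value `0` off Hermitian matrices. -/
noncomputable def matRpow {d n : ℕ} [Fact (Nat.Prime d)] (ρ : Mat d n) (t : ℝ) : Mat d n :=
  if h : ρ.IsHermitian then
    (h.eigenvectorUnitary : Mat d n) *
      Matrix.diagonal (fun i => ((h.eigenvalues i ^ t : ℝ) : ℂ)) *
      star (h.eigenvectorUnitary : Mat d n)
  else 0

/-- Support inclusion `supp ρ ⊆ supp σ`, expressed as `ker σ ⊆ ker ρ`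
(the correct notion for positive semidefinite matrices). -/
def suppLE {d n : ℕ} [Fact (Nat.Prime d)] (ρ σ : Mat d n) : Prop :=
  ∀ v : QV d n → ℂ, σ.mulVec v = 0 → ρ.mulVec v = 0

/-- Relative entropy `D(ρ‖σ) = Tr[ρ(log ρ - log σ)]` when `supp ρ ⊆ supp σ`, else `+∞`. -/
noncomputable def relEnt {d n : ℕ} [Fact (Nat.Prime d)] (ρ σ : Mat d n) : EReal :=
  if suppLE ρ σ then (((ρ * (matLog ρ - matLog σ)).trace.re : ℝ) : EReal) else ⊤

/-- Sandwiched Rényi relative entropy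
`D_α(ρ‖σ) = (α-1)⁻¹ log Tr[(σ^{(1-α)/(2α)} ρ σ^{(1-α)/(2α)})^α]` for `α ≠ 1`
(with `+∞` when `supp ρ ⊄ supp σ`), and `D_1 = D` the relative entropy. -/
noncomputable def sandRenyi {d n : ℕ} [Fact (Nat.Prime d)] (α : ℝ) (ρ σ : Mat d n) :
    EReal :=
  if α = 1 then relEnt ρ σ
  else if suppLE ρ σ then
    let x : ℝ := (α - 1)⁻¹ * Real.log
      ((matRpow (matRpow σ ((1 - α) / (2 * α)) * ρ * matRpow σ ((1 - α) / (2 * α)))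
        α).trace.re)
    (x : EReal)
  else ⊤

/-- The key unitary `U|i,j⟩ = |N g₁₁ i - N g₁₀ j, -N g₀₁ i + N g₀₀ j⟩`,
where `N = (det G)⁻¹` in `ℤ_d`. -/
noncomputable def convU (d n : ℕ) [Fact (Nat.Prime d)] (g00 g01 g10 g11 : ZMod d) :
    Matrix (QV d n × QV d n) (QV d n × QV d n) ℂ :=
  Matrix.of fun kl ij =>
    if kl = ((fun a => (g00 * g11 - g01 * g10)⁻¹ * g11 * ij.1 a
                      - (g00 * g11 - g01 * g10)⁻¹ * g10 * ij.2 a : QV d n),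
             (fun a => -((g00 * g11 - g01 * g10)⁻¹ * g01) * ij.1 a
                      + (g00 * g11 - g01 * g10)⁻¹ * g00 * ij.2 a : QV d n))
    then 1 else 0

/-- Tensor (Kronecker) product of two `n`-qudit operators, on the doubled system. -/
def kron {d n : ℕ} (ρ σ : Mat d n) : Matrix (QV d n × QV d n) (QV d n × QV d n) ℂ :=
  Matrix.of fun ij kl => ρ ij.1 kl.1 * σ ij.2 kl.2

/-- Partial trace over the second `n`-qudit factor. -/
noncomputable def ptrB {d n : ℕ} [Fact (Nat.Prime d)]
    (M : Matrix (QV d n × QV d n) (QV d n × QV d n) ℂ) : Mat d n :=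
  Matrix.of fun i i' => ∑ j : QV d n, M (i, j) (i', j)

/-- The convolution `ρ ⊠ σ = Tr_B[U (ρ ⊗ σ) U†]` with parameter matrix
`G = [g₀₀, g₀₁; g₁₀, g₁₁]`. -/
noncomputable def conv (d n : ℕ) [Fact (Nat.Prime d)] (g00 g01 g10 g11 : ZMod d)
    (ρ σ : Mat d n) : Mat d n :=
  ptrB (convU d n g00 g01 g10 g11 * kron ρ σ * (convU d n g00 g01 g10 g11)ᴴ)

/-- The beam-splitter unitary `U_{s,t}|i,j⟩ = |s i + t j, t i - s j⟩`. -/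
noncomputable def bsU (d n : ℕ) [Fact (Nat.Prime d)] (s t : ZMod d) :
    Matrix (QV d n × QV d n) (QV d n × QV d n) ℂ :=
  Matrix.of fun kl ij =>
    if kl = ((fun a => s * ij.1 a + t * ij.2 a : QV d n),
             (fun a => t * ij.1 a - s * ij.2 a : QV d n))
    then 1 else 0

/-- The beam-splitter convolution `ρ ⊠_{s,t} σ = Tr_B[U_{s,t} (ρ ⊗ σ) U_{s,t}†]`. -/
noncomputable def bsConv (d n : ℕ) [Fact (Nat.Prime d)] (s t : ZMod d)
    (ρ σ : Mat d n) : Mat d n :=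
  ptrB (bsU d n s t * kron ρ σ * (bsU d n s t)ᴴ)

/-- Iterated self-convolution: `⊠^0 ρ = ρ` and `⊠^{N+1} ρ = (⊠^N ρ) ⊠ ρ`. -/
noncomputable def bsIter (d n : ℕ) [Fact (Nat.Prime d)] (s t : ZMod d) :
    ℕ → Mat d n → Mat d n
  | 0, ρ => ρ
  | N + 1, ρ => bsConv d n s t (bsIter d n s t N ρ) ρ

/-- `ρ` is the pure stabilizer state `|ψ⟩⟨ψ|` with stabilizer label group `S ⊆ V^n`:
`S` has order `d^n` and `ψ` is a common eigenvector of all `w(p,q)`, `(p,q) ∈ S`. -/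
noncomputable def IsPureStabilizerWithGroup (d n : ℕ) [Fact (Nat.Prime d)]
    (ρ : Mat d n) (S : AddSubgroup (QV d n × QV d n)) : Prop :=
  Nat.card S = d ^ n ∧
    ∃ ψ : QV d n → ℂ, ψ ≠ 0 ∧
      ρ = Matrix.of (fun a b => ψ a * starRingEnd ℂ (ψ b)) ∧
      ∀ pq ∈ S, ∃ c : ℂ, (weyl d n pq.1 pq.2).mulVec ψ = c • ψ

/-- `ρ` is a pure stabilizer state. -/
noncomputable def IsPureStabilizer (d n : ℕ) [Fact (Nat.Prime d)] (ρ : Mat d n) : Prop :=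
  ∃ S : AddSubgroup (QV d n × QV d n), IsPureStabilizerWithGroup d n ρ S

/-- `ρ` is a stabilizer state: a convex combination of pure stabilizer states. -/
noncomputable def IsStabilizerState (d n : ℕ) [Fact (Nat.Prime d)] (ρ : Mat d n) : Prop :=
  ∃ (m : ℕ) (p : Fin m → ℝ) (τ : Fin m → Mat d n),
    (∀ i, 0 ≤ p i) ∧ ∑ i, p i = 1 ∧ (∀ i, IsPureStabilizer d n (τ i)) ∧
    ρ = ∑ i, (p i : ℂ) • τ i

/-- `U` is a Clifford unitary: a unitary mapping each Weyl operator, under conjugation,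
to a complex phase times a Weyl operator. -/
noncomputable def IsClifford (d n : ℕ) [Fact (Nat.Prime d)] (U : Mat d n) : Prop :=
  U ∈ Matrix.unitaryGroup (QV d n) ℂ ∧
    ∀ pq : QV d n × QV d n, ∃ (c : ℂ) (pq' : QV d n × QV d n),
      ‖c‖ = 1 ∧ U * weyl d n pq.1 pq.2 * Uᴴ = c • weyl d n pq'.1 pq'.2

/-- The divergence-based quantum Fisher information `J(ρ; H) = Tr[ρ [H,[H, log ρ]]]`. -/
noncomputable def fisherJ {d n : ℕ} [Fact (Nat.Prime d)] (ρ H : Mat d n) : ℝ :=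
  (ρ * (H * (H * matLog ρ - matLog ρ * H) - (H * matLog ρ - matLog ρ * H) * H)).trace.re

/-- Embed a single-qudit operator at site `k` of an `n`-qudit system
(tensored with the identity elsewhere). -/
noncomputable def embedAt (d n : ℕ) (k : Fin n) (M : Matrix (ZMod d) (ZMod d) ℂ) :
    Mat d n :=
  Matrix.of fun v w => if ∀ i, i ≠ k → v i = w i then M (v k) (w k) else 0

/-- The rank-one projection `H_j^Z = |j⟩⟨j|` onto the eigenvector of `Z`
with eigenvalue `ξ^j`. -/
noncomputable def projZ (d : ℕ) (j : ZMod d) : Matrix (ZMod d) (ZMod d) ℂ :=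
  Matrix.of fun a b => if a = j ∧ b = j then 1 else 0

/-- The rank-one projection `H_j^X` onto the eigenvector of `X` with eigenvalue `ξ^j`;
its entries are `(H_j^X)_{a b} = d⁻¹ ξ^{j(b-a)}`. -/
noncomputable def projX (d : ℕ) (j : ZMod d) : Matrix (ZMod d) (ZMod d) ℂ :=
  Matrix.of fun a b => (d : ℂ)⁻¹ * ch d (j * (b - a))

/-- Total Fisher information
`J(ρ) = ∑_{k=1}^n ∑_{j ∈ ℤ_d} J(ρ; H_j^{X_k}) + J(ρ; H_j^{Z_k})`. -/
noncomputable def fisherTotal (d n : ℕ) [Fact (Nat.Prime d)] (ρ : Mat d n) : ℝ :=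
  ∑ k : Fin n, ∑ j : ZMod d,
    (fisherJ ρ (embedAt d n k (projX d j)) + fisherJ ρ (embedAt d n k (projZ d j)))

/-- Holevo capacity of a channel `E`:
`χ(E) = sup H(∑ p_i E(ρ_i)) - ∑ p_i H(E(ρ_i))` over finite ensembles of states. -/
noncomputable def holevoCap (d n : ℕ) [Fact (Nat.Prime d)] (E : Mat d n → Mat d n) : ℝ :=
  ⨆ m : ℕ, ⨆ p : Fin m → ℝ, ⨆ ρs : Fin m → Mat d n,
    ⨆ _ : (∀ i, 0 ≤ p i) ∧ ∑ i, p i = 1 ∧ ∀ i, IsState d n (ρs i),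
      (vnEnt (∑ i, (p i : ℂ) • E (ρs i)) - ∑ i, p i * vnEnt (E (ρs i)))

/-- Hilbert–Schmidt norm `‖A‖₂ = (Tr[A†A])^{1/2}`. -/
noncomputable def hsNorm {d n : ℕ} [Fact (Nat.Prime d)] (A : Mat d n) : ℝ :=
  Real.sqrt ((Aᴴ * A).trace.re)

/-- Trace norm `‖A‖₁ = Tr[(A†A)^{1/2}]`. -/
noncomputable def trNorm {d n : ℕ} [Fact (Nat.Prime d)] (A : Mat d n) : ℝ :=
  (matRpow (Aᴴ * A) (2⁻¹ : ℝ)).trace.re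

/-- Tensor product of an `n₁`-qudit operator with an `n₂`-qudit operator,
as an `(n₁+n₂)`-qudit operator. -/
def tensorMat (d n₁ n₂ : ℕ) (ρ₁ : Mat d n₁) (ρ₂ : Mat d n₂) : Mat d (n₁ + n₂) :=
  Matrix.of fun v w =>
    ρ₁ (fun i => v (Fin.castAdd n₂ i)) (fun i => w (Fin.castAdd n₂ i)) *
    ρ₂ (fun j => v (Fin.natAdd n₁ j)) (fun j => w (Fin.natAdd n₁ j))

/-! ### Qubit (`d = 2`) specific definitions -/

/-- The `n`-qubit Weyl (Pauli) operator `w(p,q) = ⊗_i i^{-p_i q_i} Z^{p_i} X^{q_i}`. -/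
noncomputable def weyl2 (n : ℕ) (p q : Fin n → ZMod 2) :
    Matrix (Fin n → ZMod 2) (Fin n → ZMod 2) ℂ :=
  Matrix.of fun k' k =>
    if k' = k + q then
      ∏ i, ((-Complex.I) ^ ((p i).val * (q i).val) *
        (-1 : ℂ) ^ ((p i * (k i + q i)).val))
    else 0

/-- The `n`-qubit characteristic function `Ξ_ρ(p,q) = Tr[ρ w(p,q)†]`. -/
noncomputable def xi2 (n : ℕ) (ρ : Matrix (Fin n → ZMod 2) (Fin n → ZMod 2) ℂ)
    (pq : (Fin n → ZMod 2) × (Fin n → ZMod 2)) : ℂ :=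
  (ρ * (weyl2 n pq.1 pq.2)ᴴ).trace

/-- The logarithmic magic gap
`LMG(ρ) = -log₂ max{|Ξ_ρ(p,q)| : Ξ_ρ(p,q) ≠ 0, |Ξ_ρ(p,q)| ≠ 1}` (`0` if the set is
empty). -/
noncomputable def lmg (n : ℕ) (ρ : Matrix (Fin n → ZMod 2) (Fin n → ZMod 2) ℂ) : ℝ :=
  let s : Finset ℝ :=
    (Finset.univ.filter fun pq : (Fin n → ZMod 2) × (Fin n → ZMod 2) =>
      xi2 n ρ pq ≠ 0 ∧ ‖xi2 n ρ pq‖ ≠ 1).image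
      fun pq => ‖xi2 n ρ pq‖
  if h : s.Nonempty then -Real.logb 2 (s.max' h) else 0

/-- `U` is an `n`-qubit Clifford unitary. -/
noncomputable def IsClifford2 (n : ℕ) (U : Matrix (Fin n → ZMod 2) (Fin n → ZMod 2) ℂ) :
    Prop :=
  U ∈ Matrix.unitaryGroup (Fin n → ZMod 2) ℂ ∧
    ∀ pq : (Fin n → ZMod 2) × (Fin n → ZMod 2),
      ∃ (c : ℂ) (pq' : (Fin n → ZMod 2) × (Fin n → ZMod 2)),
        ‖c‖ = 1 ∧ U * weyl2 n pq.1 pq.2 * Uᴴ = c • weyl2 n pq'.1 pq'.2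

/-- The T gate `diag(1, e^{iπ/4})` acting on qubit `k` of an `n`-qubit system. -/
noncomputable def tGateAt (n : ℕ) (k : Fin n) :
    Matrix (Fin n → ZMod 2) (Fin n → ZMod 2) ℂ :=
  embedAt 2 n k (Matrix.of fun a b =>
    if a = b then (if a = 0 then 1 else Complex.exp (Real.pi * Complex.I / 4)) else 0)

/-- An `n`-qubit state: positive semidefinite with trace one. -/
def IsState2 (n : ℕ) (ρ : Matrix (Fin n → ZMod 2) (Fin n → ZMod 2) ℂ) : Prop :=
  ρ.PosSemidef ∧ ρ.trace = 1

end PaperQI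

namespace PaperQI

/-!
If `|Tr ρU| = 1` for a unitary `U`, then the variance of `U` in the state `ρ` vanishes, so
`ρU = Tr(ρU) ρ`. Hence the labels `a` with `|Ξ_ρ(a)| = 1` form a subgroup `S` of phase space, and
`Ξ(a) Ξ(b)` being symmetric in `a` and `b` forces `S` to be isotropic. On `S` the operators
`Ξ_ρ(a) w(a)` form a representation fixing `ρ`, so their average is a projection `P` with `ρP = ρ`,
and `M(ρ) = (|S| / dⁿ) P`. Both `D(ρ‖M(ρ))` and `H(M(ρ))` can then be read off.

An MSPS is `d^{-(n-r)}` times the projection onto the common fixed space of `r` phased Weyl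
operators. If the support of `ρ` lies in its support, these operators fix `ρ`, so their labels
generate a subgroup of `S`. Hence `dʳ ≤ |S|`, that is, `d^{-(n-r)} ≤ |S| / dⁿ`, and the inequality
of relative entropies is the monotonicity of the logarithm.
-/

theorem expect_eq_inv_card_smul_sum (𝕜 : Type*) {ι V : Type*} [DivisionSemiring 𝕜] [CharZero 𝕜]
    [Fintype ι] [AddCommMonoid V] [Module 𝕜 V] [Module ℚ≥0 V] (f : ι → V) :
    𝔼 i, f i = (Fintype.card ι : 𝕜)⁻¹ • ∑ i, f i := by
  rw [Finset.expect, Finset.card_univ, ← NNRat.cast_smul_eq_nnqsmul 𝕜, NNRat.cast_inv,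
    NNRat.cast_natCast]

section CharacterAverage

variable {A G : Type*} [Semiring A] [Algebra ℚ≥0 A] [AddGroup G] [Fintype G]

theorem expect_mul_apply (ψ : AddChar G A) (g : G) : (𝔼 h, ψ h) * ψ g = 𝔼 h, ψ h := by
  rw [Finset.expect_mul]
  exact Fintype.expect_equiv (Equiv.addRight g) _ _ fun h => (ψ.map_add_eq_mul h g).symm

theorem mul_expect_eq_self_iff (ψ : AddChar G A) (a : A) :
    a * 𝔼 g, ψ g = a ↔ ∀ g, a * ψ g = a := by
  refine ⟨fun ha g => ?_, fun ha => ?_⟩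
  · rw [← ha, mul_assoc, expect_mul_apply]
  · simp only [Finset.mul_expect, ha, Fintype.expect_const]

theorem isStarProjection_expect [StarRing A] [StarModule ℚ≥0 A] {ψ : AddChar G A}
    (hψ : ∀ g, star (ψ g) = ψ (-g)) : IsStarProjection (𝔼 g, ψ g) where
  isIdempotentElem := (mul_expect_eq_self_iff ψ _).2 (expect_mul_apply ψ)
  isSelfAdjoint := by
    rw [isSelfAdjoint_iff, Finset.expect, star_nnqsmul, star_sum]
    simp only [hψ]
    exact congrArg _ (Equiv.sum_comp (Equiv.neg G) ψ)

end CharacterAverage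

section CommutingProjections

theorem isStarProjection_list_prod {A : Type*} [Semiring A] [StarRing A] {l : List A}
    (hl : ∀ p ∈ l, IsStarProjection p) (hcomm : l.Pairwise Commute) : IsStarProjection l.prod := by
  induction l with
  | nil => simp [IsStarProjection.one]
  | cons p l ih =>
    rw [List.forall_mem_cons] at hl
    rw [List.pairwise_cons] at hcomm
    rw [List.prod_cons]
    exact hl.1.mul (ih hl.2 hcomm.2) (Commute.list_prod_right _ _ hcomm.1)

theorem list_prod_mul_of_mem {A : Type*} [Monoid A] {l : List A} (hcomm : l.Pairwise Commute)
    {p : A} (hp : p ∈ l) (hidem : IsIdempotentElem p) : l.prod * p = l.prod := by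
  induction l with
  | nil => simp at hp
  | cons q l ih =>
    rw [List.pairwise_cons] at hcomm
    rw [List.prod_cons]
    obtain rfl | hp := List.mem_cons.1 hp
    · have hpl : Commute p l.prod := Commute.list_prod_right _ _ hcomm.1
      rw [mul_assoc, ← hpl.eq, ← mul_assoc, hidem.eq]
    · rw [mul_assoc, ih hcomm.2 hp]

end CommutingProjections

section PosSemidef

variable {𝕜 m : Type*} [RCLike 𝕜] [Fintype m] {ρ : Matrix m m 𝕜}

open scoped MatrixOrder in
theorem mul_eq_zero_of_trace_conjTranspose_mul_mul_eq_zero (hρ : ρ.PosSemidef) {A : Matrix m m 𝕜}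
    (hA : (Aᴴ * ρ * A).trace = 0) : ρ * A = 0 := by
  obtain ⟨B, rfl⟩ := CStarAlgebra.nonneg_iff_eq_star_mul_self.1 hρ.nonneg
  have hBA : B * A = 0 := by
    rw [← trace_conjTranspose_mul_self_eq_zero_iff, ← hA, conjTranspose_mul]
    simp only [star_eq_conjTranspose, Matrix.mul_assoc]
  rw [Matrix.mul_assoc, hBA, Matrix.mul_zero]

variable [DecidableEq m] {U : Matrix m m 𝕜}

theorem trace_variance_of_mem_unitary (hρ : ρ.IsHermitian) (htr : ρ.trace = 1)
    (hU : U ∈ unitary (Matrix m m 𝕜)) :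
    ((U - (ρ * U).trace • 1)ᴴ * ρ * (U - (ρ * U).trace • 1)).trace =
      1 - (‖(ρ * U).trace‖ : 𝕜) ^ 2 := by
  have hconj : (Uᴴ * ρ).trace = star (ρ * U).trace := by
    rw [← trace_conjTranspose, conjTranspose_mul, hρ.eq]
  have hUU : (Uᴴ * ρ * U).trace = 1 := by
    rw [trace_mul_cycle, ← star_eq_conjTranspose, Unitary.mul_star_self_of_mem hU, one_mul, htr]
  rw [← RCLike.mul_conj, starRingEnd_apply]
  simp only [conjTranspose_sub, conjTranspose_smul, conjTranspose_one, sub_mul, mul_sub,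
    smul_mul_assoc, mul_smul_comm, one_mul, mul_one, trace_sub, trace_smul, hUU, hconj, htr,
    smul_eq_mul]
  ring

theorem mul_eq_trace_smul_of_norm_trace_eq_one (hρ : ρ.PosSemidef) (htr : ρ.trace = 1)
    (hU : U ∈ unitary (Matrix m m 𝕜)) (h : ‖(ρ * U).trace‖ = 1) :
    ρ * U = (ρ * U).trace • ρ := by
  have hvar := trace_variance_of_mem_unitary hρ.1 htr hU
  rw [h, RCLike.ofReal_one, one_pow, sub_self] at hvar
  simpa [mul_sub, sub_eq_zero] using mul_eq_zero_of_trace_conjTranspose_mul_mul_eq_zero hρ hvar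

end PosSemidef

section FunctionalCalculus

theorem cfc_smul_of_isStarProjection {A : Type*} [Ring A] [StarRing A] [TopologicalSpace A]
    [Algebra ℝ A] [ContinuousFunctionalCalculus ℝ A IsSelfAdjoint] [ContinuousMap.UniqueHom ℝ A]
    {Q : A} (hQ : IsStarProjection Q) {f : ℝ → ℝ} (hf : f 0 = 0) (c : ℝ) :
    cfc f (c • Q) = f c • Q := by
  have hspec : spectrum ℝ Q ⊆ {0, 1} := hQ.isIdempotentElem.spectrum_subset ℝ
  have hfin : (spectrum ℝ Q).Finite := (Set.toFinite {0, 1}).subset hspec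
  have hsa : IsSelfAdjoint Q := hQ.isSelfAdjoint
  have heq : (spectrum ℝ Q).EqOn (fun t => f (c * t)) (f c * ·) := by
    intro t ht
    obtain rfl | rfl : t = 0 ∨ t = 1 := by simpa using hspec ht
    · simp only [mul_zero, hf]
    · simp only [mul_one]
  rw [← cfc_comp_const_mul c f Q ((hfin.image _).continuousOn f), cfc_congr heq,
    cfc_const_mul_id (f c) Q]

theorem trace_cfc {𝕜 m : Type*} [RCLike 𝕜] [Fintype m] [DecidableEq m] {A : Matrix m m 𝕜}
    (hA : A.IsHermitian) (f : ℝ → ℝ) : (cfc f A).trace = ∑ i, (f (hA.eigenvalues i) : 𝕜) := by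
  rw [hA.cfc_eq, IsHermitian.cfc, Unitary.conjStarAlgAut_apply, trace_mul_cycle,
    Unitary.coe_star_mul_self, one_mul, trace_diagonal]
  rfl

end FunctionalCalculus

section Entropy

variable {d n : ℕ} [Fact (Nat.Prime d)] {ρ Q : Mat d n}

theorem matLog_eq_cfc (ρ : Mat d n) : matLog ρ = cfc Real.log ρ := by
  by_cases h : ρ.IsHermitian
  · rw [matLog, dif_pos h, h.cfc_eq, IsHermitian.cfc, Unitary.conjStarAlgAut_apply]
    rfl
  · have hsa : ¬IsSelfAdjoint ρ := h
    rw [matLog, dif_neg h, cfc_apply_of_not_predicate ρ hsa]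

theorem vnEnt_eq_neg_trace_mul_matLog (hρ : ρ.IsHermitian) :
    vnEnt ρ = -(ρ * matLog ρ).trace.re := by
  have hcont (f : ℝ → ℝ) : ContinuousOn f (spectrum ℝ ρ) := finite_real_spectrum.continuousOn f
  have hsa : IsSelfAdjoint ρ := hρ
  have hmul : ρ * matLog ρ = cfc (fun t => t * Real.log t) ρ := by
    rw [cfc_mul _ _ ρ (hcont _) (hcont _), cfc_id' ℝ ρ, matLog_eq_cfc]
  rw [vnEnt, dif_pos hρ, hmul, trace_cfc hρ, Complex.re_sum]
  simp only [RCLike.ofReal_eq_complex_ofReal, Complex.ofReal_re]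

theorem matLog_smul_of_isStarProjection (hQ : IsStarProjection Q) (c : ℝ) :
    matLog (c • Q) = Real.log c • Q := by
  rw [matLog_eq_cfc, cfc_smul_of_isStarProjection hQ Real.log_zero]

theorem vnEnt_smul_of_isStarProjection (hQ : IsStarProjection Q) {c : ℝ}
    (htr : (c • Q).trace = 1) : vnEnt (c • Q) = -Real.log c := by
  have hherm : (c • Q).IsHermitian := (IsSelfAdjoint.all c).smul hQ.isSelfAdjoint
  rw [vnEnt_eq_neg_trace_mul_matLog hherm, matLog_smul_of_isStarProjection hQ, smul_mul_smul_comm,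
    hQ.isIdempotentElem.eq, mul_comm, mul_smul, trace_smul, htr]
  simp

theorem suppLE_smul_iff (hQ : IsIdempotentElem Q) {c : ℝ} (hc : c ≠ 0) :
    suppLE ρ (c • Q) ↔ ρ * Q = ρ := by
  simp only [suppLE, smul_mulVec, smul_eq_zero_iff_right hc]
  refine ⟨fun h => ext_of_mulVec_single fun i => ?_, fun h v hv => ?_⟩
  · have hker : Q *ᵥ (Pi.single i 1 - Q *ᵥ Pi.single i 1) = 0 := by
      rw [mulVec_sub, mulVec_mulVec, hQ.eq, sub_self]
    have := h _ hker
    rwa [mulVec_sub, mulVec_mulVec, sub_eq_zero, eq_comm] at this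
  · rw [← h, ← mulVec_mulVec, hv, mulVec_zero]

theorem relEnt_smul_of_isStarProjection (hρ : IsState d n ρ) (hQ : IsStarProjection Q) {c : ℝ}
    (hc : c ≠ 0) (h : ρ * Q = ρ) :
    relEnt ρ (c • Q) = ((-Real.log c - vnEnt ρ : ℝ) : EReal) := by
  rw [relEnt, if_pos ((suppLE_smul_iff hQ.isIdempotentElem hc).2 h), EReal.coe_eq_coe_iff,
    matLog_smul_of_isStarProjection hQ, vnEnt_eq_neg_trace_mul_matLog hρ.1.1, mul_sub,
    mul_smul_comm, h, trace_sub, trace_smul, hρ.2,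
    Complex.sub_re, Complex.real_smul, mul_one, Complex.ofReal_re]
  ring

end Entropy

section SymplecticForm

variable {d n : ℕ}

/-- The symplectic form on phase space `V^n`, which governs the commutation of Weyl operators. -/
def sympForm (a b : QV d n × QV d n) : ZMod d := a.1 ⬝ᵥ b.2 - b.1 ⬝ᵥ a.2

theorem sympForm_swap (a b : QV d n × QV d n) : sympForm b a = -sympForm a b :=
  (neg_sub _ _).symm

theorem sympForm_neg_neg (a b : QV d n × QV d n) : sympForm (-a) (-b) = sympForm a b := by
  simp only [sympForm, Prod.fst_neg, Prod.snd_neg, neg_dotProduct_neg]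

theorem sympForm_neg_self (a : QV d n × QV d n) : sympForm (-a) a = 0 := by
  simp [sympForm]

theorem sympForm_smul_smul (j k : ZMod d) (a : QV d n × QV d n) :
    sympForm (j • a) (k • a) = 0 := by
  simp only [sympForm, Prod.smul_fst, Prod.smul_snd, smul_dotProduct, dotProduct_smul, smul_eq_mul]
  ring

end SymplecticForm

section WeylOperators

theorem ch_eq_stdAddChar {d : ℕ} [NeZero d] (z : ZMod d) : ch d z = ZMod.stdAddChar z := by
  rw [ZMod.stdAddChar_apply, ZMod.toCircle_apply, ch]

theorem inv_two_add_inv_two {d : ℕ} (hd : Odd d) : (2 : ZMod d)⁻¹ + 2⁻¹ = 1 := by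
  rw [← two_mul]
  exact ZMod.coe_mul_inv_eq_one 2 hd.coprime_two_left

theorem sum_stdAddChar_dotProduct {N : ℕ} [NeZero N] {ι : Type*} [Fintype ι] [DecidableEq ι]
    {p : ι → ZMod N} (hp : p ≠ 0) : ∑ k : ι → ZMod N, ZMod.stdAddChar (p ⬝ᵥ k) = 0 := by
  let ψ : AddChar (ι → ZMod N) ℂ :=
    ZMod.stdAddChar.compAddMonoidHom (dotProductEquiv (ZMod N) ι p).toAddMonoidHom
  refine (AddChar.sum_eq_zero_iff_ne_zero (ψ := ψ)).2 fun hψ => hp ?_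
  refine dotProduct_eq_zero_iff.1 fun k => ZMod.injective_stdAddChar ?_
  rw [AddChar.map_zero_eq_one]
  exact DFunLike.congr_fun hψ k

variable {d n : ℕ} [Fact (Nat.Prime d)]

/-- The Weyl operator `w(a)` of a phase space label `a = (p, q)`. -/
noncomputable def weylOp (a : QV d n × QV d n) : Mat d n := weyl d n a.1 a.2

theorem weylOp_apply (a : QV d n × QV d n) (i j : QV d n) :
    weylOp a i j =
      if i = j + a.2 then ZMod.stdAddChar (a.1 ⬝ᵥ j + 2⁻¹ * (a.1 ⬝ᵥ a.2)) else 0 := by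
  simp only [weylOp, weyl, of_apply, ch_eq_stdAddChar]
  rfl

theorem weylOp_zero : weylOp (0 : QV d n × QV d n) = 1 := by
  ext i j
  simp [weylOp_apply, one_apply]

theorem weylOp_mul (hd : Odd d) (a b : QV d n × QV d n) :
    weylOp a * weylOp b = ZMod.stdAddChar (2⁻¹ * sympForm a b) • weylOp (a + b) := by
  ext i j
  rw [mul_apply, Finset.sum_eq_single (j + b.2) (fun k _ hk => by
    rw [weylOp_apply b, if_neg hk, mul_zero]) (by simp)]
  by_cases h : i = j + b.2 + a.2
  · have h' : i = j + (a + b).2 := by rw [h, Prod.snd_add]; abel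
    simp only [Matrix.smul_apply, weylOp_apply, if_pos h, if_pos h', if_true, smul_eq_mul,
      ← AddChar.map_add_eq_mul]
    congr 1
    simp only [sympForm, Prod.fst_add, Prod.snd_add, add_dotProduct, dotProduct_add]
    linear_combination (-(a.1 ⬝ᵥ b.2)) * inv_two_add_inv_two hd
  · have h' : i ≠ j + (a + b).2 := fun h' => h (by rw [h', Prod.snd_add]; abel)
    simp only [Matrix.smul_apply, weylOp_apply, if_neg h, if_neg h', zero_mul, smul_zero]

theorem star_weylOp (hd : Odd d) (a : QV d n × QV d n) : star (weylOp a) = weylOp (-a) := by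
  ext i j
  rw [star_apply, weylOp_apply, weylOp_apply]
  by_cases h : j = i + a.2
  · have h' : i = j + (-a).2 := by rw [h, Prod.snd_neg, add_neg_cancel_right]
    rw [if_pos h, if_pos h', Complex.star_def, ← AddChar.map_neg_eq_conj, h]
    congr 1
    simp only [Prod.fst_neg, Prod.snd_neg, dotProduct_add, neg_dotProduct, dotProduct_neg]
    linear_combination (-(a.1 ⬝ᵥ a.2)) * inv_two_add_inv_two hd
  · have h' : i ≠ j + (-a).2 := fun h' => h (by rw [h', Prod.snd_neg, neg_add_cancel_right])
    rw [if_neg h, if_neg h', star_zero]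

theorem weylOp_mem_unitary (hd : Odd d) (a : QV d n × QV d n) :
    weylOp a ∈ unitary (Mat d n) := by
  have hleft (b : QV d n × QV d n) : weylOp (-b) * weylOp b = (1 : Mat d n) := by
    rw [weylOp_mul hd, sympForm_neg_self, neg_add_cancel, weylOp_zero, mul_zero,
      AddChar.map_zero_eq_one, one_smul]
  rw [Unitary.mem_iff, star_weylOp hd]
  exact ⟨hleft a, by simpa using hleft (-a)⟩

theorem trace_weylOp_of_ne_zero {a : QV d n × QV d n} (ha : a ≠ 0) :
    (weylOp a).trace = 0 := by
  simp only [trace, diag_apply, weylOp_apply, left_eq_add]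
  by_cases hq : a.2 = 0
  · have hp : a.1 ≠ 0 := fun hp => ha (Prod.ext hp hq)
    simpa [hq] using sum_stdAddChar_dotProduct hp
  · simp only [if_neg hq, Finset.sum_const_zero]

end WeylOperators

section WeylCharacters

variable {d n : ℕ} [Fact (Nat.Prime d)] {G : Type*}

/-- Multiplying the Weyl operators with labels in an isotropic subgroup by the values of a scalar
character gives a genuine character. The subgroup is given as the image of `ι`. -/
noncomputable def weylChar [AddMonoid G] (hd : Odd d) (χ : AddChar G ℂ) (ι : G →+ QV d n × QV d n)
    (hι : ∀ g h, sympForm (ι g) (ι h) = 0) : AddChar G (Mat d n) where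
  toFun g := χ g • weylOp (ι g)
  map_zero_eq_one' := by rw [χ.map_zero_eq_one, map_zero, weylOp_zero, one_smul]
  map_add_eq_mul' g h := by
    rw [smul_mul_smul_comm, weylOp_mul hd, hι, mul_zero, AddChar.map_zero_eq_one, one_smul,
      χ.map_add_eq_mul, map_add]

theorem weylChar_apply [AddMonoid G] (hd : Odd d) (χ : AddChar G ℂ) (ι : G →+ QV d n × QV d n)
    (hι : ∀ g h, sympForm (ι g) (ι h) = 0) (g : G) :
    weylChar hd χ ι hι g = χ g • weylOp (ι g) := rfl

theorem star_weylChar [AddCommGroup G] [Finite G] (hd : Odd d) (χ : AddChar G ℂ)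
    (ι : G →+ QV d n × QV d n) (hι : ∀ g h, sympForm (ι g) (ι h) = 0) (g : G) :
    star (weylChar hd χ ι hι g) = weylChar hd χ ι hι (-g) := by
  rw [weylChar_apply, weylChar_apply, star_smul, star_weylOp hd, AddChar.map_neg_eq_conj, map_neg,
    Complex.star_def]

/-- The character `k ↦ (ξ^x w(a))^k` of `ℤ_d` generated by a phased Weyl operator. -/
noncomputable def cyclicWeylChar (hd : Odd d) (a : QV d n × QV d n) (x : ZMod d) :
    AddChar (ZMod d) (Mat d n) :=
  weylChar hd (ZMod.stdAddChar.mulShift x)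
    (LinearMap.toSpanSingleton (ZMod d) _ a).toAddMonoidHom
    fun j k => by
      simpa only [LinearMap.toAddMonoidHom_coe, LinearMap.toSpanSingleton_apply] using
        sympForm_smul_smul j k a

theorem cyclicWeylChar_one (hd : Odd d) (a : QV d n × QV d n) (x : ZMod d) :
    cyclicWeylChar hd a x 1 = ch d x • weylOp a := by
  rw [cyclicWeylChar, weylChar_apply, AddChar.mulShift_apply, mul_one, ch_eq_stdAddChar]
  simp only [LinearMap.toAddMonoidHom_coe, LinearMap.toSpanSingleton_apply, one_smul]

theorem pow_val_eq_cyclicWeylChar (hd : Odd d) (a : QV d n × QV d n) (x k : ZMod d) :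
    (ch d x • weylOp a) ^ k.val = cyclicWeylChar hd a x k := by
  rw [← cyclicWeylChar_one hd, ← AddChar.map_nsmul_eq_pow, nsmul_one, ZMod.natCast_zmod_val]

end WeylCharacters

section Stabilizer

variable {d n : ℕ} [Fact (Nat.Prime d)] {ρ : Mat d n}

theorem xi_eq_trace (ρ : Mat d n) (a : QV d n × QV d n) :
    xi d n ρ a = (ρ * weylOp (-a)).trace := rfl

theorem xi_zero (hρ : IsState d n ρ) : xi d n ρ 0 = 1 := by
  rw [xi_eq_trace, neg_zero, weylOp_zero, mul_one, hρ.2]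

theorem xi_neg (hd : Odd d) (hρ : ρ.IsHermitian) (a : QV d n × QV d n) :
    xi d n ρ (-a) = star (xi d n ρ a) := by
  rw [xi_eq_trace, xi_eq_trace, ← trace_conjTranspose, conjTranspose_mul, hρ.eq,
    ← star_eq_conjTranspose, star_weylOp hd, trace_mul_comm]

theorem mul_weylOp_neg (hd : Odd d) (hρ : IsState d n ρ) {a : QV d n × QV d n}
    (ha : ‖xi d n ρ a‖ = 1) : ρ * weylOp (-a) = xi d n ρ a • ρ :=
  mul_eq_trace_smul_of_norm_trace_eq_one hρ.1 hρ.2 (weylOp_mem_unitary hd _) ha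

theorem xi_mul_xi (hd : Odd d) (hρ : IsState d n ρ) {a : QV d n × QV d n}
    (ha : ‖xi d n ρ a‖ = 1) (b : QV d n × QV d n) :
    xi d n ρ a * xi d n ρ b = ZMod.stdAddChar (2⁻¹ * sympForm a b) * xi d n ρ (a + b) := by
  calc xi d n ρ a * xi d n ρ b = (ρ * weylOp (-a) * weylOp (-b)).trace := by
        rw [mul_weylOp_neg hd hρ ha, smul_mul_assoc, trace_smul, smul_eq_mul, xi_eq_trace ρ b]
    _ = ZMod.stdAddChar (2⁻¹ * sympForm a b) * xi d n ρ (a + b) := by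
        rw [mul_assoc, weylOp_mul hd, sympForm_neg_neg, mul_smul_comm, trace_smul, smul_eq_mul,
          xi_eq_trace, neg_add]

/-- The labels at which the characteristic function of the state `ρ` is unimodular, i.e. those
whose Weyl operators fix `ρ` up to a phase. -/
noncomputable def stabilizerLabels (hd : Odd d) (hρ : IsState d n ρ) :
    AddSubgroup (QV d n × QV d n) where
  carrier := {a | ‖xi d n ρ a‖ = 1}
  zero_mem' := by simp only [Set.mem_ofPred_eq, xi_zero hρ, norm_one]
  add_mem' {a b} ha hb := by
    have h := congrArg norm (xi_mul_xi hd hρ ha b)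
    rw [norm_mul, norm_mul, ha, hb, AddChar.norm_apply, one_mul, one_mul] at h
    exact h.symm
  neg_mem' {a} ha := by
    rw [Set.mem_ofPred_eq, xi_neg hd hρ.1.1, norm_star, ha]

theorem sympForm_eq_zero_of_mem_stabilizerLabels (hd : Odd d) (hρ : IsState d n ρ)
    {a b : QV d n × QV d n} (ha : a ∈ stabilizerLabels hd hρ) (hb : b ∈ stabilizerLabels hd hρ) :
    sympForm a b = 0 := by
  have hab : ‖xi d n ρ (a + b)‖ = 1 := (stabilizerLabels hd hρ).add_mem ha hb
  have hne : xi d n ρ (a + b) ≠ 0 := norm_ne_zero_iff.1 (by rw [hab]; exact one_ne_zero)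
  have hswap := xi_mul_xi hd hρ hb a
  rw [mul_comm, xi_mul_xi hd hρ ha b, add_comm b a, sympForm_swap a b] at hswap
  have hinj := ZMod.injective_stdAddChar (mul_right_cancel₀ hne hswap)
  linear_combination hinj - sympForm a b * inv_two_add_inv_two hd

/-- The restriction of the characteristic function of a state to its stabilizer labels. -/
noncomputable def xiChar (hd : Odd d) (hρ : IsState d n ρ) :
    AddChar (stabilizerLabels hd hρ) ℂ where
  toFun a := xi d n ρ a
  map_zero_eq_one' := xi_zero hρ
  map_add_eq_mul' a b := by
    rw [xi_mul_xi hd hρ a.2, sympForm_eq_zero_of_mem_stabilizerLabels hd hρ a.2 b.2, mul_zero,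
      AddChar.map_zero_eq_one, one_mul, AddSubgroup.coe_add]

/-- The stabilizing operators `Ξ_ρ(a) w(a)` of a state, a character of its stabilizer labels. -/
noncomputable def stabilizerChar (hd : Odd d) (hρ : IsState d n ρ) :
    AddChar (stabilizerLabels hd hρ) (Mat d n) :=
  weylChar hd (xiChar hd hρ) (stabilizerLabels hd hρ).subtype
    fun a b => sympForm_eq_zero_of_mem_stabilizerLabels hd hρ a.2 b.2

theorem stabilizerChar_apply (hd : Odd d) (hρ : IsState d n ρ) (a : stabilizerLabels hd hρ) :
    stabilizerChar hd hρ a = xi d n ρ a • weylOp (a : QV d n × QV d n) := rfl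

theorem mul_stabilizerChar (hd : Odd d) (hρ : IsState d n ρ) (a : stabilizerLabels hd hρ) :
    ρ * stabilizerChar hd hρ a = ρ := by
  have h : ρ * weylOp (- -(a : QV d n × QV d n)) = xi d n ρ (-a) • ρ :=
    mul_weylOp_neg hd hρ (-a).2
  rw [neg_neg] at h
  have hχ : xi d n ρ a * xi d n ρ (-a) = 1 := by
    change xiChar hd hρ a * xiChar hd hρ (-a) = 1
    rw [← AddChar.map_add_eq_mul, add_neg_cancel, AddChar.map_zero_eq_one]
  rw [stabilizerChar_apply, mul_smul_comm, h, smul_smul, hχ, one_smul]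

theorem mem_stabilizerLabels_of_mul_smul_weylOp_eq (hd : Odd d) (hρ : IsState d n ρ)
    {a : QV d n × QV d n} {z : ℂ} (hz : ‖z‖ = 1) (h : ρ * (z • weylOp a) = ρ) :
    a ∈ stabilizerLabels hd hρ := by
  have htr : z * xi d n ρ (-a) = 1 := by
    rw [xi_eq_trace, neg_neg, ← smul_eq_mul, ← trace_smul, ← mul_smul_comm, h, hρ.2]
  have hnorm := congrArg norm htr
  rw [norm_mul, hz, one_mul, norm_one] at hnorm
  exact neg_mem_iff.1 hnorm

end Stabilizer

section MeanState

variable {d n : ℕ} [Fact (Nat.Prime d)] {ρ : Mat d n}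

theorem trace_meanState (hρ : IsState d n ρ) : (meanState d n ρ).trace = 1 := by
  have hd0 : (d : ℂ) ≠ 0 := NeZero.ne _
  have hterm (a : QV d n × QV d n) (ha : a ≠ 0) :
      (if ‖xi d n ρ a‖ = 1 then xi d n ρ a • weylOp a else 0).trace = 0 := by
    split_ifs
    · rw [trace_smul, trace_weylOp_of_ne_zero ha, smul_zero]
    · exact trace_zero _ _
  change (((d : ℂ) ^ n)⁻¹ • ∑ a, if ‖xi d n ρ a‖ = 1 then xi d n ρ a • weylOp a else 0).trace = 1
  rw [trace_smul, trace_sum, Finset.sum_eq_single 0 (fun a _ => hterm a) (by simp), xi_zero hρ,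
    norm_one, if_pos rfl, one_smul, weylOp_zero, trace_one]
  simp [ZMod.card, hd0]

/-- The projection onto the common fixed space of the stabilizing operators of a state. -/
noncomputable def meanProjection (hd : Odd d) (hρ : IsState d n ρ) : Mat d n :=
  𝔼 a, stabilizerChar hd hρ a

theorem isStarProjection_meanProjection (hd : Odd d) (hρ : IsState d n ρ) :
    IsStarProjection (meanProjection hd hρ) :=
  isStarProjection_expect (star_weylChar hd _ _ _)

theorem mul_meanProjection (hd : Odd d) (hρ : IsState d n ρ) : ρ * meanProjection hd hρ = ρ :=
  (mul_expect_eq_self_iff _ ρ).2 (mul_stabilizerChar hd hρ)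

theorem meanState_eq_smul_meanProjection (hd : Odd d) (hρ : IsState d n ρ) :
    meanState d n ρ =
      ((Nat.card (stabilizerLabels hd hρ) : ℝ) / d ^ n) • meanProjection hd hρ := by
  have hcard : (Fintype.card (stabilizerLabels hd hρ) : ℝ) ≠ 0 :=
    Nat.cast_ne_zero.2 Fintype.card_ne_zero
  have hscalar : ((d : ℂ) ^ n)⁻¹ = (((d : ℝ) ^ n)⁻¹ : ℝ) := by push_cast; rfl
  rw [meanProjection, expect_eq_inv_card_smul_sum ℝ, smul_smul, Nat.card_eq_fintype_card,
    div_mul_eq_mul_div, mul_inv_cancel₀ hcard, one_div, meanState, hscalar, Complex.coe_smul,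
    ← Finset.sum_filter]
  exact congrArg _ (Finset.sum_subtype _ (fun _ => Finset.mem_filter_univ _) _)

end MeanState

section StabilizerProjection

variable {d n r : ℕ} [Fact (Nat.Prime d)] {ρ σ : Mat d n}

/-- The projection `∏ᵢ (1/d) ∑ₖ (ξ^{xᵢ} w(aᵢ))^k` attached to the generators `aᵢ` with phases `xᵢ`,
written as a product of character averages. -/
noncomputable def stabilizerProjection (hd : Odd d) (a : Fin r → QV d n × QV d n)
    (x : Fin r → ZMod d) : Mat d n :=
  (List.ofFn fun i => 𝔼 k, cyclicWeylChar hd (a i) (x i) k).prod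

theorem isStarProjection_expect_cyclicWeylChar (hd : Odd d) (a : QV d n × QV d n) (x : ZMod d) :
    IsStarProjection (𝔼 k, cyclicWeylChar hd a x k) :=
  isStarProjection_expect (star_weylChar hd _ _ _)

theorem commute_expect_cyclicWeylChar (hd : Odd d) {a b : QV d n × QV d n}
    (h : Commute (weylOp a) (weylOp b)) (x y : ZMod d) :
    Commute (𝔼 k, cyclicWeylChar hd a x k) (𝔼 k, cyclicWeylChar hd b y k) := by
  have hpow (j k : ZMod d) : Commute (cyclicWeylChar hd a x j) (cyclicWeylChar hd b y k) := by
    rw [← pow_val_eq_cyclicWeylChar, ← pow_val_eq_cyclicWeylChar]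
    exact ((h.smul_left _).smul_right _).pow_pow _ _
  simp only [expect_eq_inv_card_smul_sum ℂ]
  exact ((Commute.sum_left _ _ _ fun j _ => Commute.sum_right _ _ _ fun k _ =>
    hpow j k).smul_left _).smul_right _

theorem pairwise_commute_stabilizerProjection_factors (hd : Odd d) {a : Fin r → QV d n × QV d n}
    (hcomm : ∀ i j, Commute (weylOp (a i)) (weylOp (a j))) (x : Fin r → ZMod d) :
    (List.ofFn fun i => 𝔼 k, cyclicWeylChar hd (a i) (x i) k).Pairwise Commute :=
  List.pairwise_ofFn.2 fun i j _ => commute_expect_cyclicWeylChar hd (hcomm i j) _ _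

theorem isStarProjection_stabilizerProjection (hd : Odd d) {a : Fin r → QV d n × QV d n}
    (hcomm : ∀ i j, Commute (weylOp (a i)) (weylOp (a j))) (x : Fin r → ZMod d) :
    IsStarProjection (stabilizerProjection hd a x) := by
  refine isStarProjection_list_prod (fun p hp => ?_)
    (pairwise_commute_stabilizerProjection_factors hd hcomm x)
  obtain ⟨i, rfl⟩ := (List.mem_ofFn' _ _).1 hp
  exact isStarProjection_expect_cyclicWeylChar hd (a i) (x i)

theorem mul_weylOp_eq_of_mul_stabilizerProjection_eq (hd : Odd d) {a : Fin r → QV d n × QV d n}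
    (hcomm : ∀ i j, Commute (weylOp (a i)) (weylOp (a j))) {x : Fin r → ZMod d}
    (h : ρ * stabilizerProjection hd a x = ρ) (i : Fin r) :
    ρ * (ch d (x i) • weylOp (a i)) = ρ := by
  have habsorb : stabilizerProjection hd a x * 𝔼 k, cyclicWeylChar hd (a i) (x i) k =
      stabilizerProjection hd a x :=
    list_prod_mul_of_mem (pairwise_commute_stabilizerProjection_factors hd hcomm x)
      ((List.mem_ofFn' _ _).2 ⟨i, rfl⟩)
      (isStarProjection_expect_cyclicWeylChar hd (a i) (x i)).isIdempotentElem
  have hfactor : ρ * 𝔼 k, cyclicWeylChar hd (a i) (x i) k = ρ := by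
    rw [← h, mul_assoc, habsorb]
  rw [← cyclicWeylChar_one hd]
  exact (mul_expect_eq_self_iff _ ρ).1 hfactor 1

theorem closure_le_stabilizerLabels (hd : Odd d) (hρ : IsState d n ρ)
    {a : Fin r → QV d n × QV d n} (hcomm : ∀ i j, Commute (weylOp (a i)) (weylOp (a j)))
    {x : Fin r → ZMod d} (h : ρ * stabilizerProjection hd a x = ρ) :
    AddSubgroup.closure (Set.range a) ≤ stabilizerLabels hd hρ := by
  rw [AddSubgroup.closure_le]
  rintro _ ⟨i, rfl⟩
  have hnorm : ‖ch d (x i)‖ = 1 := by rw [ch_eq_stdAddChar, AddChar.norm_apply]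
  exact mem_stabilizerLabels_of_mul_smul_weylOp_eq hd hρ hnorm
    (mul_weylOp_eq_of_mul_stabilizerProjection_eq hd hcomm h i)

theorem exists_eq_smul_stabilizerProjection_of_isMSPS (hd : Odd d) (hσ : IsMSPS d n σ) :
    ∃ r ≤ n, ∃ (a : Fin r → QV d n × QV d n) (x : Fin r → ZMod d),
      (∀ i j, Commute (weylOp (a i)) (weylOp (a j))) ∧
      Nat.card (AddSubgroup.closure (Set.range a)) = d ^ r ∧
      σ = ((d : ℝ) ^ (n - r))⁻¹ • stabilizerProjection hd a x := by
  obtain ⟨r, hr, p, q, x, hcomm, hcard, rfl⟩ := hσ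
  have hscalar : ((d : ℂ) ^ (n - r))⁻¹ = (((d : ℝ) ^ (n - r))⁻¹ : ℝ) := by push_cast; rfl
  refine ⟨r, hr, fun i => (p i, q i), x, hcomm, hcard, ?_⟩
  rw [hscalar, Complex.coe_smul, stabilizerProjection]
  simp only [expect_eq_inv_card_smul_sum ℂ, ← pow_val_eq_cyclicWeylChar, ZMod.card]
  rfl

end StabilizerProjection

section Minimality

variable {d n : ℕ} [Fact (Nat.Prime d)] {ρ σ : Mat d n}

theorem card_stabilizerLabels_div_pos (hd : Odd d) (hρ : IsState d n ρ) :
    0 < (Nat.card (stabilizerLabels hd hρ) : ℝ) / d ^ n :=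
  div_pos (Nat.cast_pos.2 Nat.card_pos) (pow_pos (Nat.cast_pos.2 (NeZero.pos d)) n)

theorem relEnt_meanState (hd : Odd d) (hρ : IsState d n ρ) :
    relEnt ρ (meanState d n ρ) =
      ((-Real.log (Nat.card (stabilizerLabels hd hρ) / d ^ n) - vnEnt ρ : ℝ) : EReal) := by
  rw [meanState_eq_smul_meanProjection hd hρ]
  exact relEnt_smul_of_isStarProjection hρ (isStarProjection_meanProjection hd hρ)
    (card_stabilizerLabels_div_pos hd hρ).ne' (mul_meanProjection hd hρ)

theorem vnEnt_meanState (hd : Odd d) (hρ : IsState d n ρ) :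
    vnEnt (meanState d n ρ) = -Real.log (Nat.card (stabilizerLabels hd hρ) / d ^ n) := by
  have htr := trace_meanState hρ
  rw [meanState_eq_smul_meanProjection hd hρ] at htr ⊢
  exact vnEnt_smul_of_isStarProjection (isStarProjection_meanProjection hd hρ) htr

theorem relEnt_meanState_le_of_isMSPS (hd : Odd d) (hρ : IsState d n ρ) (hσ : IsMSPS d n σ) :
    relEnt ρ (meanState d n ρ) ≤ relEnt ρ σ := by
  obtain ⟨r, hr, a, x, hcomm, hcard, rfl⟩ := exists_eq_smul_stabilizerProjection_of_isMSPS hd hσ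
  have hdpos : (0 : ℝ) < d := Nat.cast_pos.2 (NeZero.pos d)
  have hc : (0 : ℝ) < ((d : ℝ) ^ (n - r))⁻¹ := inv_pos.2 (pow_pos hdpos _)
  have hP := isStarProjection_stabilizerProjection hd hcomm x
  by_cases hsupp : suppLE ρ (((d : ℝ) ^ (n - r))⁻¹ • stabilizerProjection hd a x)
  · have hfix := (suppLE_smul_iff hP.isIdempotentElem hc.ne').1 hsupp
    have hcard_le : (d : ℝ) ^ r ≤ Nat.card (stabilizerLabels hd hρ) := by
      rw [← Nat.cast_pow, ← hcard, Nat.cast_le]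
      exact Nat.card_mono (Set.toFinite _) (closure_le_stabilizerLabels hd hρ hcomm hfix)
    have hscale : ((d : ℝ) ^ (n - r))⁻¹ ≤ Nat.card (stabilizerLabels hd hρ) / d ^ n := by
      rw [le_div_iff₀ (pow_pos hdpos n), ← pow_sub_mul_pow _ hr,
        inv_mul_cancel_left₀ (pow_pos hdpos _).ne']
      exact hcard_le
    rw [relEnt_meanState hd hρ, relEnt_smul_of_isStarProjection hρ hP hc.ne' hfix,
      EReal.coe_le_coe_iff]
    linarith [Real.log_le_log hc hscale]
  · exact le_top.trans_eq (if_neg hsupp).symm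

end Minimality

/-- For every `n`-qudit state `ρ`:
`D(ρ‖M(ρ)) = H(M(ρ)) - H(ρ)`, and for every MSPS `σ`, `D(ρ‖M(ρ)) ≤ D(ρ‖σ)`;
the mean state is a closest MSPS in relative entropy. -/
theorem statement1 (d n : ℕ) [Fact (Nat.Prime d)] (hd : Odd d) (hn : 1 ≤ n)
    (ρ : Mat d n) (hρ : IsState d n ρ) :
    relEnt ρ (meanState d n ρ) =
      ((vnEnt (meanState d n ρ) - vnEnt ρ : ℝ) : EReal) ∧
    ∀ σ : Mat d n, IsMSPS d n σ → relEnt ρ (meanState d n ρ) ≤ relEnt ρ σ :=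
  ⟨by rw [relEnt_meanState hd hρ, vnEnt_meanState hd hρ],
    fun _ hσ => relEnt_meanState_le_of_isMSPS hd hρ hσ⟩

end PaperQI
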